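/- Fix n ≥ 3. If the functor St(n,−) satisfies the local–global principle (for every commutative ring R and every g ∈ St(n,R[X]) with (ev_{X=0})_*(g) = 1 ∈ St(n,R), g = 1 if and only if (λ_M)_*(g) = 1 ∈ St(n,R_M[X]) for all maximal ideals M of R), then for every commutative ring R the subgroup K₂(n,R) := ker(φ : St(n,R) → GL(n,R)) is central in St(n,R). -/

import Mathlib

open scoped commutatorElement

/-- Generators of the Steinberg group: triples (i,j,r) with i ≠ j. -/
abbrev StGen (n : ℕ) (R : Type) : Type := {p : Fin n × Fin n // p.1 ≠ p.2} × R

/-- The Steinberg relations. -/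
inductive StRels (n : ℕ) (R : Type) [CommRing R] : FreeGroup (StGen n R) → Prop
  | add (i j : Fin n) (hij : i ≠ j) (r s : R) :
      StRels n R (FreeGroup.of (⟨(i, j), hij⟩, r) * FreeGroup.of (⟨(i, j), hij⟩, s) *
        (FreeGroup.of (⟨(i, j), hij⟩, r + s))⁻¹)
  | commZero (i j h k : Fin n) (hij : i ≠ j) (hhk : h ≠ k) (hjh : j ≠ h) (hik : i ≠ k) (r s : R) :
      StRels n R ⁅(FreeGroup.of (⟨(i, j), hij⟩, r) : FreeGroup (StGen n R)), FreeGroup.of (⟨(h, k), hhk⟩, s)⁆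
  | commAdd (i j k : Fin n) (hij : i ≠ j) (hjk : j ≠ k) (hik : i ≠ k) (r s : R) :
      StRels n R (⁅(FreeGroup.of (⟨(i, j), hij⟩, r) : FreeGroup (StGen n R)), FreeGroup.of (⟨(j, k), hjk⟩, s)⁆ *
        (FreeGroup.of (⟨(i, k), hik⟩, r * s))⁻¹)

/-- The Steinberg group `St(n, R)`. -/
abbrev SteinbergGroup (n : ℕ) (R : Type) [CommRing R] : Type :=
  PresentedGroup {w | StRels n R w}

/-- The generator `x_{ij}(r)` of the Steinberg group. -/
def stx (n : ℕ) (R : Type) [CommRing R] (i j : Fin n) (hij : i ≠ j) (r : R) :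
    SteinbergGroup n R :=
  PresentedGroup.of (⟨(i, j), hij⟩, r)

/-- The Quillen local-global principle for the functor `St(n, -)`. -/
def LocalGlobalPrinciple (n : ℕ) : Prop :=
  ∀ (R : Type) [CommRing R] (g : SteinbergGroup n (Polynomial R))
    (ev0 : SteinbergGroup n (Polynomial R) →* SteinbergGroup n R),
    (∀ (i j : Fin n) (hij : i ≠ j) (p : Polynomial R),
      ev0 (stx n (Polynomial R) i j hij p) = stx n R i j hij (Polynomial.eval 0 p)) →
    ev0 g = 1 →
    (g = 1 ↔
      ∀ (M : Ideal R) [M.IsMaximal]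
        (lM : SteinbergGroup n (Polynomial R) →*
          SteinbergGroup n (Polynomial (Localization.AtPrime M))),
        (∀ (i j : Fin n) (hij : i ≠ j) (p : Polynomial R),
          lM (stx n (Polynomial R) i j hij p) =
            stx n (Polynomial (Localization.AtPrime M)) i j hij
              (p.map (algebraMap R (Localization.AtPrime M)))) →
        lM g = 1)

/-!
Over a local ring every element of `St(n, R)` has a Gauss decomposition `a b h c` with `a`, `c`
upper unitriangular, `b` lower unitriangular and `h` in the torus generated by the products
`w_{ij}(u) w_{ij}(v)`: this set contains `1`, and it is stable under left multiplication by the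
upper root elements and by the lower ones attached to simple roots, which together generate.
Stability under a simple root reduces to the rank one group spanned by `x_{ij}` and `x_{ji}`.

Unitriangular subgroups embed into `SL(n, R)`, so an element of `K₂(n, R)` with a Gauss
decomposition lies in the torus. Torus elements rescale each root subgroup, and the scalars can be
read off from their image in `SL(n, R)`; this still holds after any base change `R → S`. Hence the
image of `K₂(n, R)` in `St(n, S)` is central when `R` is local.

For general `R` and `g ∈ K₂(n, R)`, the commutator `⁅x_{ij}(rX), g⁆ ∈ St(n, R[X])` is trivial at
`X = 0` and, by the local case, over each `R_M[X]`. The local-global principle makes it trivial,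
and putting `X = 1` shows that `g` commutes with `x_{ij}(r)`.
-/

open Matrix (SpecialLinearGroup)

namespace SteinbergGroup

/-! ### Groups, transvections and local rings -/

theorem semiconjBy_commutator {G : Type*} [Group G] {g a b a' b' : G} (ha : SemiconjBy g a a')
    (hb : SemiconjBy g b b') : SemiconjBy g ⁅a, b⁆ ⁅a', b'⁆ :=
  ((ha.mul_right hb).mul_right ha.inv_right).mul_right hb.inv_right

theorem exists_mul_eq_mul_of_mem_normalizer {G : Type*} [Group G] {N : Subgroup G} {y u : G}
    (hy : y ∈ Subgroup.normalizer (N : Set G)) (hu : u ∈ N) : ∃ v ∈ N, y * u = v * y :=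
  ⟨y * u * y⁻¹, (Subgroup.mem_normalizer_iff.1 hy u).1 hu, by group⟩

section Transvection

variable {ι A : Type*} [DecidableEq ι] [Fintype ι] [CommRing A]

theorem commute_transvection {i j h k : ι} (hij : i ≠ j)
    (hhk : h ≠ k) (hjh : j ≠ h) (hik : i ≠ k) (r s : A) :
    Commute (SpecialLinearGroup.transvection hij r) (SpecialLinearGroup.transvection hhk s) :=
  Subtype.ext <| by
    simp [SpecialLinearGroup.transvection_coe, add_mul, mul_add,
      Matrix.single_mul_single_of_ne, hjh, hik.symm, add_comm, add_left_comm]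

theorem commutator_transvection {i j k : ι} (hij : i ≠ j)
    (hjk : j ≠ k) (hik : i ≠ k) (r s : A) :
    ⁅SpecialLinearGroup.transvection hij r, SpecialLinearGroup.transvection hjk s⁆ =
      SpecialLinearGroup.transvection hik (r * s) := by
  rw [commutatorElement_def, mul_inv_eq_iff_eq_mul, mul_inv_eq_iff_eq_mul]
  refine Subtype.ext ?_
  simp [SpecialLinearGroup.transvection_coe, add_mul, mul_add,
    Matrix.single_mul_single_of_ne, hjk.symm, hik.symm, add_assoc, add_comm, add_left_comm]

end Transvection

theorem isUnit_one_add_of_not_isUnit {A : Type*} [CommRing A] [IsLocalRing A] {a : A}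
    (ha : ¬IsUnit a) : IsUnit (1 + a) := by
  simpa using IsLocalRing.isUnit_one_sub_self_of_mem_nonunits (-a) (mt (IsUnit.neg_iff a).1 ha)

variable {n : ℕ} {R S : Type} [CommRing R] [CommRing S]

/-! ### Root elements and functoriality -/

/-- The root element `x_{ij}(r)`, extended by `x_{ii}(r) = 1` so that statements need not carry
proofs of `i ≠ j`. -/
def x (i j : Fin n) (r : R) : SteinbergGroup n R :=
  if h : i ≠ j then stx n R i j h r else 1

theorem x_of_ne {i j : Fin n} (h : i ≠ j) (r : R) : x i j r = stx n R i j h r :=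
  dif_pos h

@[simp]
theorem x_self (i : Fin n) (r : R) : x i i r = 1 :=
  dif_neg (not_not_intro rfl)

theorem x_add (i j : Fin n) (r s : R) : x i j (r + s) = x i j r * x i j s := by
  rcases eq_or_ne i j with rfl | hij
  · simp
  · simp only [x_of_ne hij]
    exact (PresentedGroup.mk_eq_mk_of_mul_inv_mem (StRels.add i j hij r s)).symm

/-- The root subgroup homomorphism `r ↦ x_{ij}(r)`. -/
def xHom (i j : Fin n) : Multiplicative R →* SteinbergGroup n R :=
  MonoidHom.mk' (fun r => x i j r.toAdd) fun r s => x_add i j r.toAdd s.toAdd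

@[simp]
theorem x_zero (i j : Fin n) : x i j (0 : R) = 1 :=
  map_one (xHom i j)

theorem x_neg (i j : Fin n) (r : R) : x i j (-r) = (x i j r)⁻¹ :=
  map_inv (xHom i j) (Multiplicative.ofAdd r)

theorem commute_x_x {i j h k : Fin n} (hjh : j ≠ h) (hik : i ≠ k) (r s : R) :
    Commute (x i j r) (x h k s) := by
  rcases eq_or_ne i j with rfl | hij
  · simp
  rcases eq_or_ne h k with rfl | hhk
  · simp
  rw [x_of_ne hij, x_of_ne hhk, ← commutatorElement_eq_one_iff_commute]
  exact PresentedGroup.one_of_mem (StRels.commZero i j h k hij hhk hjh hik r s)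

theorem commutator_x_x {i j k : Fin n} (hij : i ≠ j) (hjk : j ≠ k) (hik : i ≠ k) (r s : R) :
    ⁅x i j r, x j k s⁆ = x i k (r * s) := by
  simp only [x_of_ne hij, x_of_ne hjk, x_of_ne hik]
  exact PresentedGroup.mk_eq_mk_of_mul_inv_mem (StRels.commAdd i j k hij hjk hik r s)

theorem closure_x : Subgroup.closure {g : SteinbergGroup n R | ∃ i j r, g = x i j r} = ⊤ := by
  rw [eq_top_iff, ← PresentedGroup.closure_range_of, Subgroup.closure_le]
  rintro _ ⟨⟨⟨⟨i, j⟩, hij⟩, r⟩, rfl⟩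
  exact Subgroup.subset_closure ⟨i, j, r, (x_of_ne hij r).symm⟩

theorem mem_center_of_forall_commute_x {g : SteinbergGroup n R}
    (hg : ∀ i j r, Commute (x i j r) g) : g ∈ Subgroup.center (SteinbergGroup n R) := by
  rw [← Subgroup.centralizer_univ, ← Subgroup.coe_top, ← closure_x, Subgroup.centralizer_closure,
    Subgroup.mem_centralizer_iff]
  rintro _ ⟨i, j, r, rfl⟩
  exact hg i j r

theorem hom_ext {M : Type*} [Monoid M] {φ ψ : SteinbergGroup n R →* M}
    (h : ∀ i j, i ≠ j → ∀ r, φ (x i j r) = ψ (x i j r)) : φ = ψ := by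
  refine MonoidHom.eq_of_eqOn_dense closure_x ?_
  rintro _ ⟨i, j, r, rfl⟩
  rcases eq_or_ne i j with rfl | hij
  · simp
  · exact h i j hij r

/-- The homomorphism out of `St(n, R)` determined by a family satisfying the Steinberg relations. -/
def lift {G : Type*} [Group G] (y : ∀ i j : Fin n, i ≠ j → R → G)
    (hadd : ∀ i j hij r s, y i j hij (r + s) = y i j hij r * y i j hij s)
    (hcomm : ∀ i j h k hij hhk, j ≠ h → i ≠ k → ∀ r s, Commute (y i j hij r) (y h k hhk s))
    (hmul : ∀ i j k hij hjk hik r s, ⁅y i j hij r, y j k hjk s⁆ = y i k hik (r * s)) :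
    SteinbergGroup n R →* G :=
  PresentedGroup.toGroup (f := fun p : StGen n R => y p.1.1.1 p.1.1.2 p.1.2 p.2) <| by
    rintro _ (⟨i, j, hij, r, s⟩ | ⟨i, j, h, k, hij, hhk, hjh, hik, r, s⟩ |
      ⟨i, j, k, hij, hjk, hik, r, s⟩)
    · simp [hadd]
    · simpa [map_commutatorElement, commutatorElement_eq_one_iff_commute] using
        hcomm i j h k hij hhk hjh hik r s
    · simp [map_commutatorElement, hmul i j k hij hjk hik]

theorem lift_x {G : Type*} [Group G] {y : ∀ i j : Fin n, i ≠ j → R → G} (hadd hcomm hmul)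
    {i j : Fin n} (hij : i ≠ j) (r : R) : lift y hadd hcomm hmul (x i j r) = y i j hij r := by
  rw [x_of_ne hij]
  exact PresentedGroup.toGroup.of _

/-- The homomorphism `f_* : St(n, R) → St(n, S)` induced by a ring homomorphism `f`. -/
def map (f : R →+* S) : SteinbergGroup n R →* SteinbergGroup n S :=
  lift (fun i j _ r => x i j (f r)) (fun i j _ r s => by rw [map_add, x_add])
    (fun _ _ _ _ _ _ hjh hik r s => commute_x_x hjh hik (f r) (f s))
    (fun _ _ _ hij hjk hik r s => by rw [commutator_x_x hij hjk hik, map_mul])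

@[simp]
theorem map_x (f : R →+* S) (i j : Fin n) (r : R) : map f (x i j r) = x i j (f r) := by
  rcases eq_or_ne i j with rfl | hij
  · simp
  · exact lift_x _ _ _ hij r

theorem map_map {T : Type} [CommRing T] (f : R →+* S) (g : S →+* T) (a : SteinbergGroup n R) :
    map g (map f a) = map (g.comp f) a :=
  DFunLike.congr_fun (hom_ext fun i j _ r => by simp : (map g).comp (map f) = map (g.comp f)) a

/-- The canonical homomorphism `φ : St(n, R) → GL(n, R)`, with codomain restricted to `SL(n, R)`. -/
def toSL : SteinbergGroup n R →* SpecialLinearGroup (Fin n) R :=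
  lift (fun _ _ hij r => SpecialLinearGroup.transvection hij r)
    (fun _ _ hij r s => SpecialLinearGroup.transvection_add hij r s)
    (fun _ _ _ _ hij hhk hjh hik r s => commute_transvection hij hhk hjh hik r s)
    (fun _ _ _ hij hjk hik r s => commutator_transvection hij hjk hik r s)

theorem toSL_x {i j : Fin n} (hij : i ≠ j) (r : R) :
    toSL (x i j r) = SpecialLinearGroup.transvection hij r :=
  lift_x _ _ _ hij r

theorem toSL_map (f : R →+* S) (g : SteinbergGroup n R) :
    toSL (map f g) = SpecialLinearGroup.map f (toSL g) := by
  suffices toSL.comp (map f) = (SpecialLinearGroup.map f).comp toSL from DFunLike.congr_fun this g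
  refine hom_ext fun i j hij r => Subtype.ext ?_
  simp [toSL_x hij, SpecialLinearGroup.transvection_coe, Matrix.map_add]

theorem toSL_x_apply {i j : Fin n} (hij : i ≠ j) (r : R) : toSL (x i j r) i j = r := by
  simp [toSL_x hij, SpecialLinearGroup.transvection_coe, hij]

theorem toSL_x_mul_apply {i j : Fin n} (hij : i ≠ j) (r : R) (g : SteinbergGroup n R) (l : Fin n) :
    toSL (x i j r * g) i l = toSL g i l + r * toSL g j l := by
  rw [map_mul, toSL_x hij]
  exact Matrix.transvection_mul_apply_same i j l r _

theorem toSL_x_mul_apply_of_ne {i j k : Fin n} (hij : i ≠ j) (hk : k ≠ i) (r : R)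
    (g : SteinbergGroup n R) (l : Fin n) : toSL (x i j r * g) k l = toSL g k l := by
  rw [map_mul, toSL_x hij]
  exact Matrix.transvection_mul_apply_of_ne i j k l hk r _

theorem toSL_mul_x_apply {i j : Fin n} (hij : i ≠ j) (r : R) (g : SteinbergGroup n R) (k : Fin n) :
    toSL (g * x i j r) k j = toSL g k j + r * toSL g k i := by
  rw [map_mul, toSL_x hij]
  exact Matrix.mul_transvection_apply_same i j k r _

/-! ### Weyl elements -/

theorem semiconjBy_x_left {i j k : Fin n} (hij : i ≠ j) (hjk : j ≠ k) (hik : i ≠ k) (r s : R) :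
    SemiconjBy (x i j r) (x j k s) (x i k (r * s) * x j k s) := by
  rw [← commutator_x_x hij hjk hik, commutatorElement_def, SemiconjBy]
  group

theorem semiconjBy_x_right {i j k : Fin n} (hij : i ≠ j) (hjk : j ≠ k) (hik : i ≠ k) (r s : R) :
    SemiconjBy (x j k s) (x i j r) (x i k (-(r * s)) * x i j r) := by
  rw [x_neg, ← commutator_x_x hij hjk hik, commutatorElement_def, SemiconjBy]
  group

/-- The Weyl element `w_{ij}(u)`, a lift to `St(n, R)` of a monomial matrix of the
transposition `(i j)`. -/
def w (i j : Fin n) (u : Rˣ) : SteinbergGroup n R :=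
  x i j (u : R) * x j i (-↑u⁻¹ : R) * x i j (u : R)

theorem w_neg (i j : Fin n) (u : Rˣ) : w i j (-u) = (w i j u)⁻¹ := by
  simp [w, x_neg, mul_assoc]

theorem map_w (f : R →+* S) (i j : Fin n) (u : Rˣ) :
    map f (w i j u) = w i j (Units.map f u) := by
  simp [w, ← map_inv]

theorem x_eq_x_mul_w_mul_x (i j : Fin n) (u : Rˣ) :
    x j i (u : R) = x i j (↑u⁻¹ : R) * w i j (-u⁻¹) * x i j (↑u⁻¹ : R) := by
  simp [w, x_neg, mul_assoc]

theorem semiconjBy_w_of_w_neg {i j : Fin n} {u : Rˣ} {a b : SteinbergGroup n R}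
    (h : SemiconjBy (w i j (-u)) a b) : SemiconjBy (w i j u) b a := by
  rwa [w_neg, SemiconjBy.inv_symm_left_iff] at h

theorem commute_w_x {i j k l : Fin n} (hki : k ≠ i) (hkj : k ≠ j) (hli : l ≠ i) (hlj : l ≠ j)
    (u : Rˣ) (s : R) : Commute (w i j u) (x k l s) :=
  ((commute_x_x hkj.symm hli.symm _ _).mul_left (commute_x_x hki.symm hlj.symm _ _)).mul_left
    (commute_x_x hkj.symm hli.symm _ _)

theorem semiconjBy_w_fst_left {i j k : Fin n} (hij : i ≠ j) (hki : k ≠ i) (hkj : k ≠ j) (u : Rˣ)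
    (s : R) : SemiconjBy (w i j u) (x i k s) (x j k (-↑u⁻¹ * s)) := by
  have hfirst : SemiconjBy (x i j ↑u) (x i k s) (x i k s) := commute_x_x hij.symm hki.symm _ _
  have hsecond := semiconjBy_x_left hij.symm hki.symm hkj.symm (-↑u⁻¹ : R) s
  have hthird := (semiconjBy_x_left hij hkj.symm hki.symm (u : R) (-↑u⁻¹ * s)).mul_right hfirst
  have hcancel : x i k (↑u * (-↑u⁻¹ * s)) * x j k (-↑u⁻¹ * s) * x i k s = x j k (-↑u⁻¹ * s) := by
    rw [(commute_x_x hkj hki.symm _ _).eq, mul_assoc, ← x_add]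
    simp
  exact hcancel ▸ (hthird.mul_left hsecond).mul_left hfirst

theorem semiconjBy_w_snd_right {i j k : Fin n} (hij : i ≠ j) (hki : k ≠ i) (hkj : k ≠ j) (u : Rˣ)
    (s : R) : SemiconjBy (w i j u) (x k j s) (x k i (s * ↑u⁻¹)) := by
  have hfirst : SemiconjBy (x i j ↑u) (x k j s) (x k j s) := commute_x_x hkj.symm hij _ _
  have hsecond := semiconjBy_x_right hkj hij.symm hki s (-↑u⁻¹ : R)
  have hthird := (semiconjBy_x_right hki hij hkj (s * ↑u⁻¹) (u : R)).mul_right hfirst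
  have hcancel : x k j (-(s * ↑u⁻¹ * ↑u)) * x k i (s * ↑u⁻¹) * x k j s = x k i (s * ↑u⁻¹) := by
    rw [(commute_x_x hkj.symm hki _ _).eq, mul_assoc, ← x_add]
    simp
  rw [mul_neg, neg_neg] at hsecond
  exact hcancel ▸ (hthird.mul_left hsecond).mul_left hfirst

theorem semiconjBy_w_snd_left {i j k : Fin n} (hij : i ≠ j) (hki : k ≠ i) (hkj : k ≠ j) (u : Rˣ)
    (s : R) : SemiconjBy (w i j u) (x j k s) (x i k (u * s)) := by
  simpa using semiconjBy_w_of_w_neg (semiconjBy_w_fst_left hij hki hkj (-u) (u * s))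

theorem semiconjBy_w_fst_right {i j k : Fin n} (hij : i ≠ j) (hki : k ≠ i) (hkj : k ≠ j) (u : Rˣ)
    (s : R) : SemiconjBy (w i j u) (x k i s) (x k j (-↑u * s)) := by
  simpa [mul_comm] using semiconjBy_w_of_w_neg (semiconjBy_w_snd_right hij hki hkj (-u) (-↑u * s))

theorem semiconjBy_w_same (hn : 3 ≤ n) {i j : Fin n} (hij : i ≠ j) (u : Rˣ) (s : R) :
    SemiconjBy (w i j u) (x i j s) (x j i (-(↑u⁻¹ * ↑u⁻¹) * s)) := by
  obtain ⟨m, hmi, hmj⟩ : ∃ m, m ≠ i ∧ m ≠ j := Fin.exists_ne_and_ne_of_two_lt i j hn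
  have h := semiconjBy_commutator (semiconjBy_w_fst_left hij hmi hmj u s)
    (semiconjBy_w_snd_right hij hmi hmj u 1)
  rw [commutator_x_x hmi.symm hmj hij, commutator_x_x hmj.symm hmi hij.symm, mul_one] at h
  convert h using 2
  ring

theorem semiconjBy_w_symm (hn : 3 ≤ n) {i j : Fin n} (hij : i ≠ j) (u : Rˣ) (s : R) :
    SemiconjBy (w i j u) (x j i s) (x i j (-(↑u * ↑u) * s)) := by
  have h := semiconjBy_w_of_w_neg (semiconjBy_w_same hn hij (-u) (-(↑u * ↑u) * s))
  convert h using 2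
  simp [← mul_assoc, mul_assoc (↑u⁻¹ : R)]

theorem exists_semiconjBy_w (hn : 3 ≤ n) {i j : Fin n} (hij : i ≠ j) (u : Rˣ) (k l : Fin n) :
    ∃ c : Rˣ, ∀ s : R, SemiconjBy (w i j u) (x k l s)
      (x (Equiv.swap i j k) (Equiv.swap i j l) (c * s)) := by
  rcases eq_or_ne k l with rfl | hkl
  · exact ⟨1, by simp⟩
  rcases eq_or_ne k i with rfl | hki
  · rcases eq_or_ne l j with rfl | hlj
    · exact ⟨-(u⁻¹ * u⁻¹), fun s => by simpa using semiconjBy_w_same hn hij u s⟩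
    · exact ⟨-u⁻¹, fun s => by
        simpa [Equiv.swap_apply_of_ne_of_ne hkl.symm hlj] using
          semiconjBy_w_fst_left hij hkl.symm hlj u s⟩
  rcases eq_or_ne k j with rfl | hkj
  · rcases eq_or_ne l i with rfl | hli
    · exact ⟨-(u * u), fun s => by simpa using semiconjBy_w_symm hn hij u s⟩
    · exact ⟨u, fun s => by
        simpa [Equiv.swap_apply_of_ne_of_ne hli hkl.symm] using
          semiconjBy_w_snd_left hij hli hkl.symm u s⟩
  rw [Equiv.swap_apply_of_ne_of_ne hki hkj]
  rcases eq_or_ne l i with rfl | hli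
  · exact ⟨-u, fun s => by simpa using semiconjBy_w_fst_right hij hki hkj u s⟩
  rcases eq_or_ne l j with rfl | hlj
  · exact ⟨u⁻¹, fun s => by simpa [mul_comm] using semiconjBy_w_snd_right hij hki hkj u s⟩
  · exact ⟨1, fun s => by
      simpa only [Equiv.swap_apply_of_ne_of_ne hli hlj, Units.val_one, one_mul] using
        (commute_w_x hki hkj hli hlj u s).semiconjBy⟩

/-! ### The torus -/

variable (n R) in
/-- The torus of `St(n, R)`, a lift of the group of diagonal matrices of determinant one. -/
def torus : Subgroup (SteinbergGroup n R) :=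
  Subgroup.closure {g | ∃ i j, i ≠ j ∧ ∃ u v, g = w i j u * w i j v}

theorem w_mul_w_mem_torus {i j : Fin n} (hij : i ≠ j) (u v : Rˣ) : w i j u * w i j v ∈ torus n R :=
  Subgroup.subset_closure ⟨i, j, hij, u, v, rfl⟩

theorem map_mem_torus (f : R →+* S) {h : SteinbergGroup n R} (hh : h ∈ torus n R) :
    map f h ∈ torus n S := by
  suffices torus n R ≤ (torus n S).comap (map f) from this hh
  refine (Subgroup.closure_le _).2 ?_
  rintro _ ⟨i, j, hij, u, v, rfl⟩
  simpa [map_w] using w_mul_w_mem_torus hij _ _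

theorem exists_semiconjBy_of_mem_torus (hn : 3 ≤ n) {h : SteinbergGroup n R} (hh : h ∈ torus n R)
    (k l : Fin n) : ∃ c : Rˣ, ∀ s : R, SemiconjBy h (x k l s) (x k l (c * s)) := by
  induction hh using Subgroup.closure_induction with
  | mem g hg =>
    obtain ⟨i, j, hij, u, v, rfl⟩ := hg
    obtain ⟨c, hc⟩ := exists_semiconjBy_w hn hij v k l
    obtain ⟨d, hd⟩ := exists_semiconjBy_w hn hij u (Equiv.swap i j k) (Equiv.swap i j l)
    exact ⟨d * c, fun s => by simpa [mul_assoc] using (hd (c * s)).mul_left (hc s)⟩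
  | one => exact ⟨1, by simp⟩
  | mul g h _ _ hg hh =>
    obtain ⟨c, hc⟩ := hh
    obtain ⟨d, hd⟩ := hg
    exact ⟨d * c, fun s => by simpa [mul_assoc] using (hd (c * s)).mul_left (hc s)⟩
  | inv g _ hg =>
    obtain ⟨c, hc⟩ := hg
    exact ⟨c⁻¹, fun s => by simpa using hc (↑c⁻¹ * s)⟩

theorem exists_x_mul_eq_mul_x_of_mem_torus (hn : 3 ≤ n) {h : SteinbergGroup n R}
    (hh : h ∈ torus n R) (k l : Fin n) (r : R) : ∃ s, x k l r * h = h * x k l s := by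
  obtain ⟨c, hc⟩ := exists_semiconjBy_of_mem_torus hn hh k l
  exact ⟨↑c⁻¹ * r, by rw [(hc _).eq, Units.mul_inv_cancel_left]⟩

theorem toSL_apply_eq_zero_of_mem_torus (hn : 3 ≤ n) {h : SteinbergGroup n R} (hh : h ∈ torus n R)
    {k l : Fin n} (hkl : k ≠ l) : toSL h k l = 0 := by
  obtain ⟨c, hc⟩ := exists_semiconjBy_of_mem_torus hn hh l k
  have hentry : toSL (h * x l k 1) k k = toSL (x l k (c * 1 : R) * h) k k := by rw [(hc 1).eq]
  rw [toSL_mul_x_apply hkl.symm, toSL_x_mul_apply_of_ne hkl.symm hkl] at hentry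
  simpa using hentry

theorem mem_center_of_mem_torus (hn : 3 ≤ n) {h : SteinbergGroup n R} (hh : h ∈ torus n R)
    (hone : toSL h = 1) : h ∈ Subgroup.center (SteinbergGroup n R) := by
  refine mem_center_of_forall_commute_x fun k l s => ?_
  rcases eq_or_ne k l with rfl | hkl
  · simp
  obtain ⟨c, hc⟩ := exists_semiconjBy_of_mem_torus hn hh k l
  have hentry : toSL (x k l (1 : R)) k l = toSL (x k l (c * 1 : R)) k l := by
    simpa [hone] using congr(toSL $((hc 1).eq) k l)
  rw [toSL_x_apply hkl, toSL_x_apply hkl, mul_one] at hentry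
  have hcomm : SemiconjBy h (x k l s) (x k l s) := by simpa [← hentry] using hc s
  exact hcomm.symm

/-! ### Unitriangular subgroups -/

variable (R) in
/-- The subgroup generated by the root elements `x_{ij}(r)` with `ρ i j`. For a strict order `ρ`
it is a lift of the group of unitriangular matrices of shape `ρ`. -/
def xClosure (ρ : Fin n → Fin n → Prop) : Subgroup (SteinbergGroup n R) :=
  Subgroup.closure {g | ∃ i j r, ρ i j ∧ g = x i j r}

variable {ρ ρ' : Fin n → Fin n → Prop}

theorem x_mem_xClosure {i j : Fin n} (hij : ρ i j) (r : R) : x i j r ∈ xClosure R ρ :=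
  Subgroup.subset_closure ⟨i, j, r, hij, rfl⟩

theorem xClosure_le {H : Subgroup (SteinbergGroup n R)} :
    xClosure R ρ ≤ H ↔ ∀ i j, ρ i j → ∀ r, x i j r ∈ H := by
  refine ⟨fun h i j hij r => h (x_mem_xClosure hij r), fun h => (Subgroup.closure_le H).2 ?_⟩
  rintro _ ⟨i, j, r, hij, rfl⟩
  exact h i j hij r

theorem xClosure_mono (h : ρ ≤ ρ') : xClosure R ρ ≤ xClosure R ρ' :=
  xClosure_le.2 fun i j hij => x_mem_xClosure (h i j hij)

@[elab_as_elim]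
theorem xClosure_induction {p : SteinbergGroup n R → Prop} (one : p 1)
    (x_mul : ∀ i j r g, ρ i j → p g → p (x i j r * g)) {g : SteinbergGroup n R}
    (hg : g ∈ xClosure R ρ) : p g := by
  induction hg using Subgroup.closure_induction_left with
  | one => exact one
  | mul_left a ha g _ hg =>
    obtain ⟨i, j, r, hij, rfl⟩ := ha
    exact x_mul i j r g hij hg
  | inv_mul_cancel a ha g _ hg =>
    obtain ⟨i, j, r, hij, rfl⟩ := ha
    exact x_neg i j r ▸ x_mul i j (-r) g hij hg

theorem le_normalizer_xClosure {H : Subgroup (SteinbergGroup n R)}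
    (h : ∀ a ∈ H, ∀ i j, ρ i j → ∀ r, ∃ b ∈ xClosure R ρ, SemiconjBy a (x i j r) b) :
    H ≤ Subgroup.normalizer (xClosure R ρ) := by
  refine Subgroup.le_normalizer_closure_iff.2 ?_
  rintro a ha _ ⟨i, j, r, hij, rfl⟩
  obtain ⟨b, hb, hab⟩ := h a ha i j hij r
  rwa [hab.eq, mul_inv_cancel_right]

theorem torus_le_normalizer_xClosure (hn : 3 ≤ n) :
    torus n R ≤ Subgroup.normalizer (xClosure R ρ) :=
  le_normalizer_xClosure fun _ hh i j hij r =>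
    let ⟨c, hc⟩ := exists_semiconjBy_of_mem_torus hn hh i j
    ⟨x i j (c * r), x_mem_xClosure hij _, hc r⟩

theorem range_xHom_le_normalizer_xClosure (hρ : ∀ k, ¬ρ k k) {i j : Fin n} (hij : i ≠ j)
    (hright : ∀ k, ρ k i → ρ k j) (hleft : ∀ l, ρ j l → ρ i l) :
    (xHom i j : Multiplicative R →* _).range ≤ Subgroup.normalizer (xClosure R ρ) := by
  refine le_normalizer_xClosure ?_
  rintro _ ⟨r, rfl⟩ k l hkl s
  have hne : k ≠ l := fun h => hρ k (h ▸ hkl)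
  rcases eq_or_ne l i with rfl | hli
  · have hkj : k ≠ j := fun h => hρ k (h ▸ hright k hkl)
    exact ⟨_, mul_mem (x_mem_xClosure (hright k hkl) _) (x_mem_xClosure hkl s),
      semiconjBy_x_right hne hij hkj s r.toAdd⟩
  rcases eq_or_ne k j with rfl | hkj
  · exact ⟨_, mul_mem (x_mem_xClosure (hleft l hkl) _) (x_mem_xClosure hkl s),
      semiconjBy_x_left hij hne hli.symm r.toAdd s⟩
  · exact ⟨x k l s, x_mem_xClosure hkl s, commute_x_x hkj.symm hli.symm _ _⟩

theorem toSL_apply_of_mem_xClosure [IsStrictOrder (Fin n) ρ] {g : SteinbergGroup n R}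
    (hg : g ∈ xClosure R ρ) :
    ∀ k l, ¬ρ k l → toSL g k l = (1 : Matrix (Fin n) (Fin n) R) k l := by
  refine xClosure_induction (by simp) (fun i j r g hij ih k l hkl => ?_) hg
  have hne : i ≠ j := ne_of_irrefl hij
  rcases eq_or_ne k i with rfl | hki
  · have hjl : j ≠ l := fun h => hkl (h ▸ hij)
    rw [toSL_x_mul_apply hne, ih k l hkl, ih j l fun h => hkl (_root_.trans hij h),
      Matrix.one_apply_ne hjl, mul_zero, add_zero]
  · rw [toSL_x_mul_apply_of_ne hne hki, ih k l hkl]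

/-- The relation `ρ` with the pair `(i, j)` removed. -/
def erasePair (ρ : Fin n → Fin n → Prop) (i j : Fin n) : Fin n → Fin n → Prop :=
  fun k l => ρ k l ∧ ¬(k = i ∧ l = j)

theorem erasePair_le (i j : Fin n) : erasePair ρ i j ≤ ρ :=
  fun _ _ h => h.1

theorem isStrictOrder_erasePair [IsStrictOrder (Fin n) ρ] {i j : Fin n}
    (hcov : ∀ k, ρ i k → ¬ρ k j) : IsStrictOrder (Fin n) (erasePair ρ i j) where
  irrefl k h := irrefl k h.1
  trans k l m hkl hlm :=
    ⟨_root_.trans hkl.1 hlm.1, by rintro ⟨rfl, rfl⟩; exact hcov l hkl.1 hlm.1⟩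

theorem range_xHom_le_normalizer_erasePair [IsStrictOrder (Fin n) ρ] {i j : Fin n} (hij : ρ i j) :
    (xHom i j : Multiplicative R →* _).range ≤
      Subgroup.normalizer (xClosure R (erasePair ρ i j)) :=
  range_xHom_le_normalizer_xClosure (fun k h => irrefl k h.1) (ne_of_irrefl hij)
    (fun _ h => ⟨_root_.trans h.1 hij, fun e => ne_of_irrefl h.1 e.1⟩)
    (fun _ h => ⟨_root_.trans hij h.1, fun e => ne_of_irrefl h.1 e.2.symm⟩)

theorem range_xHom_symm_le_normalizer_erasePair [IsStrictOrder (Fin n) ρ] {i j : Fin n}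
    (hij : ρ i j) (hpred : ∀ k, ρ k j → k = i ∨ ρ k i) (hsucc : ∀ l, ρ i l → l = j ∨ ρ j l) :
    (xHom j i : Multiplicative R →* _).range ≤
      Subgroup.normalizer (xClosure R (erasePair ρ i j)) :=
  range_xHom_le_normalizer_xClosure (fun k h => irrefl k h.1) (ne_of_irrefl hij).symm
    (fun k h => ⟨(hpred k h.1).resolve_left fun e => h.2 ⟨e, rfl⟩,
      fun e => ne_of_irrefl hij e.2⟩)
    (fun l h => ⟨(hsucc l h.1).resolve_left fun e => h.2 ⟨rfl, e⟩,
      fun e => ne_of_irrefl hij e.1.symm⟩)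

theorem exists_eq_x_mul_of_mem_xClosure [IsStrictOrder (Fin n) ρ] {i j : Fin n} (hij : ρ i j)
    {g : SteinbergGroup n R} (hg : g ∈ xClosure R ρ) :
    ∃ r, ∃ u ∈ xClosure R (erasePair ρ i j), g = x i j r * u := by
  have hle : xClosure R ρ ≤ (xHom i j).range ⊔ xClosure R (erasePair ρ i j) := by
    refine xClosure_le.2 fun k l hkl r => ?_
    by_cases h : k = i ∧ l = j
    · obtain ⟨rfl, rfl⟩ := h
      exact Subgroup.mem_sup_left ⟨Multiplicative.ofAdd r, rfl⟩
    · exact Subgroup.mem_sup_right (x_mem_xClosure ⟨hkl, h⟩ r)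
  have hmem := hle hg
  rw [← SetLike.mem_coe, Subgroup.coe_mul_of_left_le_normalizer_right _ _
    (range_xHom_le_normalizer_erasePair hij)] at hmem
  obtain ⟨_, ⟨r, rfl⟩, u, hu, rfl⟩ := hmem
  exact ⟨r.toAdd, u, hu, rfl⟩

theorem exists_eq_mul_x_of_mem_xClosure [IsStrictOrder (Fin n) ρ] {i j : Fin n} (hij : ρ i j)
    {g : SteinbergGroup n R} (hg : g ∈ xClosure R ρ) :
    ∃ u ∈ xClosure R (erasePair ρ i j), ∃ r, g = u * x i j r := by
  obtain ⟨r, u, hu, h⟩ := exists_eq_x_mul_of_mem_xClosure hij (inv_mem hg)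
  exact ⟨u⁻¹, inv_mem hu, -r, by rw [x_neg, ← mul_inv_rev, ← h, inv_inv]⟩

theorem exists_rel_forall_not_between [IsStrictOrder (Fin n) ρ] {i j : Fin n} (hij : ρ i j) :
    ∃ m, ρ i m ∧ ∀ k, ρ i k → ¬ρ k m :=
  (Finite.wellFounded_of_trans_of_irrefl ρ).has_min {m | ρ i m} ⟨j, hij⟩

theorem eq_one_of_mem_xClosure [hρ : IsStrictOrder (Fin n) ρ] {g : SteinbergGroup n R}
    (hg : g ∈ xClosure R ρ) (hone : toSL g = 1) : g = 1 := by
  induction ρ using WellFoundedLT.induction generalizing hρ g with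
  | ind ρ ih =>
    by_cases hne : ∃ i j, ρ i j
    · obtain ⟨i, _, hij⟩ := hne
      obtain ⟨j, hij, hcov⟩ := exists_rel_forall_not_between hij
      have := isStrictOrder_erasePair hcov
      obtain ⟨r, u, hu, rfl⟩ := exists_eq_x_mul_of_mem_xClosure hij hg
      have hne : i ≠ j := ne_of_irrefl hij
      have hr : r = 0 := by
        have hentry := toSL_x_mul_apply hne r u j
        rw [toSL_apply_of_mem_xClosure hu i j fun h => h.2 ⟨rfl, rfl⟩,
          toSL_apply_of_mem_xClosure hu j j (irrefl j), hone] at hentry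
        simpa [hne] using hentry.symm
      subst hr
      rw [x_zero, one_mul] at hone ⊢
      exact ih _ (lt_of_le_of_ne (erasePair_le i j) fun h =>
        ((congr_fun₂ h i j).mpr hij).2 ⟨rfl, rfl⟩) hu hone
    · have hbot : xClosure R ρ ≤ ⊥ := xClosure_le.2 fun i j hij => (hne ⟨i, j, hij⟩).elim
      exact Subgroup.mem_bot.1 (hbot hg)

/-! ### Gauss decompositions of elements of the kernel -/

theorem toSL_mul_apply_of_mem_torus (hn : 3 ≤ n) (g : SteinbergGroup n R)
    {h : SteinbergGroup n R} (hh : h ∈ torus n R) (k l : Fin n) :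
    toSL (g * h) k l = toSL g k l * toSL h l l := by
  have hoff (m : Fin n) (hml : m ≠ l) : toSL g k m * toSL h m l = 0 := by
    rw [toSL_apply_eq_zero_of_mem_torus hn hh hml, mul_zero]
  rw [map_mul]
  exact Fintype.sum_eq_single l hoff

theorem right_eq_one_of_toSL_eq_one (hn : 3 ≤ n) {b h c : SteinbergGroup n R}
    (hb : b ∈ xClosure R (· > ·)) (hh : h ∈ torus n R) (hc : c ∈ xClosure R (· < ·))
    (hone : toSL (b * h * c) = 1) : c = 1 := by
  have hinv : toSL (b * h) = toSL c⁻¹ := by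
    rw [map_inv, ← mul_eq_one_iff_eq_inv, ← map_mul, hone]
  refine inv_eq_one.1 (eq_one_of_mem_xClosure (inv_mem hc) (Subtype.ext ?_))
  ext k l
  by_cases hkl : k < l
  · rw [← hinv, toSL_mul_apply_of_mem_torus hn b hh, toSL_apply_of_mem_xClosure hb k l hkl.asymm]
    simp [hkl.ne]
  · exact toSL_apply_of_mem_xClosure (inv_mem hc) k l hkl

theorem left_eq_one_of_toSL_eq_one (hn : 3 ≤ n) {b h : SteinbergGroup n R}
    (hb : b ∈ xClosure R (· > ·)) (hh : h ∈ torus n R) (hone : toSL (b * h) = 1) : b = 1 := by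
  have hentry (k l : Fin n) : toSL b k l * toSL h l l = (1 : Matrix (Fin n) (Fin n) R) k l := by
    simp [← toSL_mul_apply_of_mem_torus hn b hh, hone]
  have hdiag (l : Fin n) : toSL h l l = 1 := by
    simpa [toSL_apply_of_mem_xClosure hb l l (lt_irrefl l)] using hentry l l
  refine eq_one_of_mem_xClosure hb (Subtype.ext ?_)
  ext k l
  simpa [hdiag] using hentry k l

/-! ### Gauss decomposition in rank one -/

section RankOne

variable {i j : Fin n}

theorem exists_x_mul_x_eq_of_unit (hn : 3 ≤ n) (hij : i ≠ j) (u e : Rˣ) {t : R}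
    (he : (e : R) = 1 + u * t) :
    ∃ h ∈ torus n R, ∃ c, x i j (u : R) * x j i t = x j i (t * ↑e⁻¹) * h * x i j c := by
  set v : Rˣ := u⁻¹ * e with hv
  have hvt : (v : R) = ↑u⁻¹ + t := by simp [hv, he, mul_add]
  refine ⟨w i j u * w i j (-v⁻¹), w_mul_w_mem_torus hij _ _, ↑v⁻¹, ?_⟩
  have hleft : x i j (u : R) * x j i (-↑u⁻¹ : R) = w i j u * x i j (-↑u : R) := by simp [w, x_neg]
  have hcoeff : -(↑u⁻¹ * ↑u⁻¹) * (-↑u + ↑v⁻¹) = t * (↑e⁻¹ : R) := by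
    have ht : t = ↑u⁻¹ * (e - 1) := by simp [he]
    have hv' : (↑v⁻¹ : R) = u * ↑e⁻¹ := by simp [hv, mul_comm]
    rw [ht, hv']
    linear_combination (↑u⁻¹ - ↑u⁻¹ * ↑e⁻¹) * u.inv_mul - ↑u⁻¹ * e.mul_inv
  calc x i j (u : R) * x j i t
      = x i j (u : R) * x j i (-↑u⁻¹ : R) * x j i (v : R) := by
        rw [mul_assoc, ← x_add, hvt, neg_add_cancel_left]
    _ = w i j u * x i j (-↑u + ↑v⁻¹ : R) * w i j (-v⁻¹) * x i j (↑v⁻¹ : R) := by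
        rw [hleft, x_eq_x_mul_w_mul_x i j v, x_add]
        simp only [mul_assoc]
    _ = x j i (t * ↑e⁻¹) * (w i j u * w i j (-v⁻¹)) * x i j (↑v⁻¹ : R) := by
        rw [(semiconjBy_w_same hn hij u _).eq, hcoeff]
        simp only [mul_assoc]

theorem exists_x_add_one_mul_x_eq_of_unit (hn : 3 ≤ n) (hij : i ≠ j) (u e f : Rˣ) {t : R}
    (he : (e : R) = 1 + (u + 1) * t) (hf : (f : R) = 1 + t) :
    ∃ a, ∃ h ∈ torus n R, ∃ c, x i j (u + 1 : R) * x j i t = x j i a * h * x i j c := by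
  obtain ⟨h, hh, c, hone⟩ := exists_x_mul_x_eq_of_unit (t := t) hn hij 1 f (by simpa using hf)
  have hquot : (↑(e * f⁻¹) : R) = 1 + u * (t * ↑f⁻¹) := by
    rw [Units.val_mul, Units.mul_inv_eq_iff_eq_mul, add_mul, ← mul_assoc,
      Units.inv_mul_cancel_right, he, hf]
    ring
  obtain ⟨h', hh', c', hunit⟩ := exists_x_mul_x_eq_of_unit hn hij u (e * f⁻¹) hquot
  obtain ⟨d, hd⟩ := exists_x_mul_eq_mul_x_of_mem_torus hn hh i j c'
  rw [Units.val_one] at hone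
  refine ⟨t * ↑f⁻¹ * ↑(e * f⁻¹)⁻¹, h' * h, mul_mem hh' hh, d + c, ?_⟩
  rw [x_add, mul_assoc, hone, ← mul_assoc, ← mul_assoc, hunit, mul_assoc _ (x i j c'), hd, x_add]
  simp only [mul_assoc]

theorem exists_x_mul_x_eq [IsLocalRing R] (hn : 3 ≤ n) (hij : i ≠ j) {s t : R}
    (hst : IsUnit (1 + s * t)) :
    ∃ a, ∃ h ∈ torus n R, ∃ c, x i j s * x j i t = x j i a * h * x i j c := by
  obtain ⟨e, he⟩ := hst
  by_cases hs : IsUnit s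
  · obtain ⟨u, rfl⟩ := hs
    exact ⟨_, exists_x_mul_x_eq_of_unit hn hij u e he⟩
  by_cases ht : IsUnit t
  · obtain ⟨u, rfl⟩ := ht
    obtain ⟨h, hh, c, hinv⟩ := exists_x_mul_x_eq_of_unit (t := -s) hn hij.symm (-u) e
      (by rw [he, Units.val_neg]; ring)
    exact ⟨-c, h⁻¹, inv_mem hh, s * ↑e⁻¹, by
      simpa [x_neg, mul_assoc] using congr_arg Inv.inv hinv⟩
  · -- Neither `s` nor `t` is a unit, so `s - 1` and `1 + t` are: split off `x i j 1`.
    obtain ⟨u, hu⟩ := (IsLocalRing.isUnit_one_sub_self_of_mem_nonunits s hs).neg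
    obtain ⟨f, hf⟩ := isUnit_one_add_of_not_isUnit ht
    have hsu : s = u + 1 := by rw [hu]; ring
    rw [hsu] at he ⊢
    exact exists_x_add_one_mul_x_eq_of_unit hn hij u e f he hf

theorem exists_x_mul_x_mul_x_eq_of_unit [IsLocalRing R] (hn : 3 ≤ n) (hij : i ≠ j) (r : R) {s : R}
    (t : Rˣ) (hst : ¬IsUnit (1 + s * t)) :
    ∃ a b, ∃ h ∈ torus n R, ∃ c,
      x j i r * x i j s * x j i (t : R) = x i j a * x j i b * h * x i j c := by
  set q : R := s + ↑t⁻¹ with hq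
  have hsplit : x i j s * x j i (t : R) = x i j q * w i j (-t⁻¹) * x i j (↑t⁻¹ : R) := by
    rw [x_eq_x_mul_w_mul_x i j t, hq, x_add]
    simp only [mul_assoc]
  -- `q t = 1 + s t` is not a unit, so `x j i r * x i j q` can be reordered.
  have hrq : IsUnit (1 + r * q) := by
    refine isUnit_one_add_of_not_isUnit fun hunit => hst ?_
    have hqt : q * t = 1 + s * t := by rw [hq, add_mul, Units.inv_mul, add_comm]
    exact hqt ▸ (isUnit_of_mul_isUnit_right hunit).mul t.isUnit
  obtain ⟨a, h, hh, m, hrev⟩ := exists_x_mul_x_eq hn hij.symm hrq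
  obtain ⟨b, hb⟩ := exists_semiconjBy_of_mem_torus hn hh i j
  obtain ⟨c, hc⟩ := exists_semiconjBy_of_mem_torus hn hh j i
  obtain ⟨d, hd⟩ := exists_semiconjBy_w hn hij (-t⁻¹) i j
  have hw : x j i m * w i j (-t⁻¹) = w i j (-t⁻¹) * x i j (↑d⁻¹ * m) := by
    simpa using (hd (↑d⁻¹ * m)).eq.symm
  have hhw : h * w i j (-t⁻¹) =
      x i j (b * -↑t⁻¹ : R) * x j i (c * t : R) * h * x i j (-↑t⁻¹ : R) := by
    rw [← ((hb (-↑t⁻¹)).mul_right (hc t)).eq]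
    simp [w, mul_assoc]
  refine ⟨a + b * -↑t⁻¹, c * t, h, hh, -↑t⁻¹ + ↑d⁻¹ * m + ↑t⁻¹, ?_⟩
  calc x j i r * x i j s * x j i (t : R)
      = x i j a * h * (x j i m * w i j (-t⁻¹)) * x i j (↑t⁻¹ : R) := by
        rw [mul_assoc, hsplit, ← mul_assoc, ← mul_assoc, hrev]
        simp only [mul_assoc]
    _ = x i j a * (h * w i j (-t⁻¹)) * x i j (↑d⁻¹ * m) * x i j (↑t⁻¹ : R) := by
        rw [hw]
        simp only [mul_assoc]
    _ = _ := by
        rw [hhw]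
        simp only [x_add, mul_assoc]

theorem exists_x_mul_x_mul_x_eq [IsLocalRing R] (hn : 3 ≤ n) (hij : i ≠ j) (r s t : R) :
    ∃ a b, ∃ h ∈ torus n R, ∃ c,
      x j i r * x i j s * x j i t = x i j a * x j i b * h * x i j c := by
  by_cases hst : IsUnit (1 + s * t)
  · obtain ⟨b, h, hh, c, heq⟩ := exists_x_mul_x_eq hn hij hst
    exact ⟨0, r + b, h, hh, c, by rw [mul_assoc, heq, x_zero, one_mul, x_add]; group⟩
  · have ht : IsUnit t := by
      by_contra ht
      exact hst (isUnit_one_add_of_not_isUnit fun h => ht (isUnit_of_mul_isUnit_right h))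
    obtain ⟨u, rfl⟩ := ht
    exact exists_x_mul_x_mul_x_eq_of_unit hn hij r u hst

end RankOne

/-! ### Gauss decomposition over a local ring -/

variable (n R) in
/-- The set `U⁺ U⁻ T U⁺` of elements of `St(n, R)` admitting a Gauss decomposition, where `U⁺` and
`U⁻` are the upper and lower unitriangular subgroups and `T` is the torus. -/
def gaussCell : Set (SteinbergGroup n R) :=
  {g | ∃ a ∈ xClosure R (· < ·), ∃ b ∈ xClosure R (· > ·), ∃ h ∈ torus n R,
    ∃ c ∈ xClosure R (· < ·), g = a * b * h * c}

theorem mul_mem_gaussCell {y g : SteinbergGroup n R} (hy : y ∈ xClosure R (· < ·))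
    (hg : g ∈ gaussCell n R) : y * g ∈ gaussCell n R := by
  obtain ⟨a, ha, b, hb, h, hh, c, hc, rfl⟩ := hg
  exact ⟨y * a, mul_mem hy ha, b, hb, h, hh, c, hc, by simp only [mul_assoc]⟩

theorem x_mem_normalizer_xClosure_erasePair_gt {i j : Fin n} (hij : i ⋖ j) (r : R) :
    x i j r ∈ Subgroup.normalizer (xClosure R (erasePair (· > ·) j i)) :=
  range_xHom_symm_le_normalizer_erasePair (ρ := (· > ·)) hij.lt
    (fun _ hk => (hij.ge_of_gt hk).eq_or_lt') (fun _ hl => (hij.le_of_lt hl).eq_or_lt)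
    ⟨Multiplicative.ofAdd r, rfl⟩

theorem x_mem_normalizer_xClosure_erasePair_lt {i j : Fin n} (hij : i ⋖ j) (r : R) :
    x j i r ∈ Subgroup.normalizer (xClosure R (erasePair (· < ·) i j)) :=
  range_xHom_symm_le_normalizer_erasePair hij.lt
    (fun _ hk => (hij.le_of_lt hk).eq_or_lt) (fun _ hl => (hij.ge_of_gt hl).eq_or_lt')
    ⟨Multiplicative.ofAdd r, rfl⟩

theorem x_mul_mem_gaussCell [IsLocalRing R] (hn : 3 ≤ n) {i j : Fin n} (hij : i ⋖ j) (r : R)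
    {g : SteinbergGroup n R} (hg : g ∈ gaussCell n R) : x j i r * g ∈ gaussCell n R := by
  obtain ⟨a, ha, b, hb, h, hh, c, hc, rfl⟩ := hg
  obtain ⟨a₁, ha₁, s, rfl⟩ := exists_eq_mul_x_of_mem_xClosure hij.lt ha
  obtain ⟨t, b₁, hb₁, rfl⟩ := exists_eq_x_mul_of_mem_xClosure (ρ := (· > ·)) hij.lt hb
  obtain ⟨p, q, h₀, hh₀, m, hrank⟩ := exists_x_mul_x_mul_x_eq hn hij.ne r s t
  obtain ⟨a₂, ha₂, hswap_a⟩ :=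
    exists_mul_eq_mul_of_mem_normalizer (x_mem_normalizer_xClosure_erasePair_lt hij r) ha₁
  obtain ⟨b₂, hb₂, hswap_b⟩ :=
    exists_mul_eq_mul_of_mem_normalizer (x_mem_normalizer_xClosure_erasePair_gt hij m) hb₁
  obtain ⟨b₃, hb₃, hswap_h₀⟩ :=
    exists_mul_eq_mul_of_mem_normalizer (torus_le_normalizer_xClosure hn hh₀) hb₂
  obtain ⟨m', hswap_h⟩ := exists_x_mul_eq_mul_x_of_mem_torus hn hh i j m
  refine ⟨a₂ * x i j p, mul_mem (xClosure_mono (erasePair_le i j) ha₂) (x_mem_xClosure hij.lt p),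
    x j i q * b₃,
    mul_mem (x_mem_xClosure (ρ := (· > ·)) hij.lt q) (xClosure_mono (erasePair_le j i) hb₃),
    h₀ * h, mul_mem hh₀ hh, x i j m' * c, mul_mem (x_mem_xClosure hij.lt m') hc, ?_⟩
  calc x j i r * (a₁ * x i j s * (x j i t * b₁) * h * c)
      = x j i r * a₁ * x i j s * x j i t * b₁ * h * c := by simp only [mul_assoc]
    _ = a₂ * (x j i r * x i j s * x j i t) * b₁ * h * c := by rw [hswap_a]; simp only [mul_assoc]
    _ = a₂ * x i j p * x j i q * h₀ * (x i j m * b₁) * h * c := by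
        rw [hrank]; simp only [mul_assoc]
    _ = a₂ * x i j p * x j i q * (h₀ * b₂) * (x i j m * h) * c := by
        rw [hswap_b]; simp only [mul_assoc]
    _ = a₂ * x i j p * (x j i q * b₃) * (h₀ * h) * (x i j m' * c) := by
        rw [hswap_h₀, hswap_h]; simp only [mul_assoc]

theorem xClosure_lt_or_covBy : xClosure R (fun i j : Fin n => i < j ∨ j ⋖ i) = ⊤ := by
  set H := xClosure R (fun i j : Fin n => i < j ∨ j ⋖ i)
  have hlower (i : Fin n) : ∀ j < i, ∀ r, x i j r ∈ H := by
    induction i using WellFoundedLT.induction with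
    | ind i ih =>
      intro j hji r
      obtain ⟨k, hjk, hki⟩ := exists_le_covBy_of_lt hji
      rcases hjk.eq_or_lt with rfl | hjk
      · exact x_mem_xClosure (Or.inr hki) r
      · rw [← mul_one r, ← commutator_x_x hki.lt.ne' hjk.ne' hji.ne']
        have hik : x i k r ∈ H := x_mem_xClosure (Or.inr hki) r
        have hkj : x k j 1 ∈ H := ih k hki.lt j hjk 1
        exact mul_mem (mul_mem (mul_mem hik hkj) (inv_mem hik)) (inv_mem hkj)
  rw [eq_top_iff, ← closure_x, Subgroup.closure_le]
  rintro _ ⟨i, j, r, rfl⟩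
  rcases lt_trichotomy i j with hij | rfl | hji
  · exact x_mem_xClosure (Or.inl hij) r
  · exact x_self i r ▸ one_mem H
  · exact hlower i j hji r

theorem gaussCell_eq_univ [IsLocalRing R] (hn : 3 ≤ n) : gaussCell n R = Set.univ := by
  refine Set.eq_univ_of_forall fun g => ?_
  have hg : g ∈ xClosure R (fun i j : Fin n => i < j ∨ j ⋖ i) :=
    by rw [xClosure_lt_or_covBy]; exact Subgroup.mem_top g
  refine xClosure_induction ?_ (fun i j r g hij hg => ?_) hg
  · exact ⟨1, one_mem _, 1, one_mem _, 1, one_mem _, 1, one_mem _, by simp⟩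
  · exact hij.elim (fun hij => mul_mem_gaussCell (x_mem_xClosure hij r) hg)
      fun hji => x_mul_mem_gaussCell hn hji r hg

theorem mem_torus_of_toSL_eq_one [IsLocalRing R] (hn : 3 ≤ n) {g : SteinbergGroup n R}
    (hone : toSL g = 1) : g ∈ torus n R := by
  obtain ⟨a, ha, b, hb, h, hh, c, hc, rfl⟩ : g ∈ gaussCell n R := by simp [gaussCell_eq_univ hn]
  have hconj : toSL (b * h * (c * a)) = 1 := by
    have hg : b * h * (c * a) = a⁻¹ * (a * b * h * c) * a := by group
    rw [hg, map_mul, map_mul, hone, mul_one, ← map_mul, inv_mul_cancel, map_one]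
  have hca : c * a = 1 := right_eq_one_of_toSL_eq_one hn hb hh (mul_mem hc ha) hconj
  rw [hca, mul_one] at hconj
  obtain rfl : b = 1 := left_eq_one_of_toSL_eq_one hn hb hh hconj
  rw [one_mul] at hconj
  have hcenter := mem_center_of_mem_torus hn hh hconj
  have hcomm : a * h = h * a := Subgroup.mem_center_iff.1 hcenter a
  rwa [mul_one, hcomm, mul_assoc, mul_eq_one_symm hca, mul_one]

theorem map_mem_center_of_toSL_eq_one [IsLocalRing R] (hn : 3 ≤ n) (f : R →+* S)
    {g : SteinbergGroup n R} (hone : toSL g = 1) : map f g ∈ Subgroup.center (SteinbergGroup n S) :=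
  mem_center_of_mem_torus hn (map_mem_torus f (mem_torus_of_toSL_eq_one hn hone)) <| by
    rw [toSL_map, hone, map_one]

/-! ### The local-global principle -/

open Polynomial

theorem eq_one_of_localGlobalPrinciple (h : LocalGlobalPrinciple n) {g : SteinbergGroup n R[X]}
    (hzero : map (evalRingHom 0) g = 1)
    (hloc : ∀ (M : Ideal R) [M.IsMaximal],
      map (mapRingHom (algebraMap R (Localization.AtPrime M))) g = 1) : g = 1 := by
  refine (h R g (map (evalRingHom 0)) (fun i j hij p => ?_) hzero).2 fun M _ lM hlM => ?_
  · simp only [← x_of_ne hij, map_x, coe_evalRingHom]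
  · suffices lM = map (mapRingHom (algebraMap R (Localization.AtPrime M))) from this ▸ hloc M
    refine hom_ext fun i j hij p => ?_
    rw [map_x, x_of_ne hij, x_of_ne hij, hlM, coe_mapRingHom]

theorem toSL_eq_one_of_mem_ker {φ : SteinbergGroup n R →* Matrix.GeneralLinearGroup (Fin n) R}
    (hφ : ∀ (i j : Fin n) (hij : i ≠ j) (r : R),
      (φ (stx n R i j hij r) : Matrix (Fin n) (Fin n) R) = 1 + Matrix.single i j r)
    {g : SteinbergGroup n R} (hg : g ∈ φ.ker) : toSL g = 1 := by
  have hφ_eq : φ = SpecialLinearGroup.toGL.comp toSL := hom_ext fun i j hij r => by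
    ext : 1
    rw [x_of_ne hij, hφ, ← x_of_ne hij, MonoidHom.comp_apply, toSL_x hij]
    rfl
  rw [hφ_eq, MonoidHom.mem_ker, MonoidHom.comp_apply] at hg
  exact SpecialLinearGroup.toGL_injective (hg.trans (map_one _).symm)

theorem map_mapRingHom_map_C (f : R →+* S) (g : SteinbergGroup n R) :
    map (mapRingHom f) (map C g) = map C (map f g) := by
  rw [map_map, map_map, mapRingHom_comp_C]

theorem map_evalRingHom_map_C (r : R) (g : SteinbergGroup n R) :
    map (evalRingHom r) (map C g) = g := by
  rw [map_map]
  exact DFunLike.congr_fun (hom_ext fun i j _ s => by simp :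
    map ((evalRingHom r).comp C) = MonoidHom.id (SteinbergGroup n R)) g

theorem commutator_x_map_C_eq_one (hn : 3 ≤ n) (h : LocalGlobalPrinciple n)
    {g : SteinbergGroup n R} (hone : toSL g = 1) (i j : Fin n) (r : R) :
    ⁅x i j (C r * X), map C g⁆ = 1 := by
  refine eq_one_of_localGlobalPrinciple h (by simp [map_commutatorElement]) fun M _ => ?_
  have hloc : toSL (map (algebraMap R (Localization.AtPrime M)) g) = 1 := by
    rw [toSL_map, hone, map_one]
  have hcenter := map_mem_center_of_toSL_eq_one hn C hloc
  rw [map_commutatorElement, map_mapRingHom_map_C, commutatorElement_eq_one_iff_mul_comm]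
  exact Subgroup.mem_center_iff.1 hcenter _

theorem commute_x_of_toSL_eq_one (hn : 3 ≤ n) (h : LocalGlobalPrinciple n)
    {g : SteinbergGroup n R} (hone : toSL g = 1) (i j : Fin n) (r : R) : Commute (x i j r) g := by
  rw [← commutatorElement_eq_one_iff_commute]
  simpa [map_commutatorElement, map_evalRingHom_map_C] using
    congr_arg (map (evalRingHom 1)) (commutator_x_map_C_eq_one hn h hone i j r)

end SteinbergGroup

theorem stmt4 (n : ℕ) (hn : 3 ≤ n) (h : LocalGlobalPrinciple n)
    (R : Type) [CommRing R]
    (φ : SteinbergGroup n R →* Matrix.GeneralLinearGroup (Fin n) R)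
    (hφ : ∀ (i j : Fin n) (hij : i ≠ j) (r : R),
      (φ (stx n R i j hij r) : Matrix (Fin n) (Fin n) R) = 1 + Matrix.single i j r) :
    φ.ker ≤ Subgroup.center (SteinbergGroup n R) := by
  intro g hg
  have hone : SteinbergGroup.toSL g = 1 := SteinbergGroup.toSL_eq_one_of_mem_ker hφ hg
  exact SteinbergGroup.mem_center_of_forall_commute_x
    (SteinbergGroup.commute_x_of_toSL_eq_one hn h hone)
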